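/- arXiv:1509.01326 — 2 statements merged into one kernel-verified Lean document; each statement's English description precedes it below -/
import Mathlib

section
/- Let X ⊆ L_{132} with D(X) < D(L_{132}). Then |X| ≤ 22. -/
/-!
A vector of `L 1 k 2` is a coordinate `a` (the entry `-1`) together with a pair `{b, c}` (the
entries `1`), so a set of such vectors is a family of graphs, with an edge set `E a` for each
coordinate `a`. Two vectors are at distance `√10` exactly when they are `(a; b, p)` and `(b; a, q)`
with `p ≠ q`. Hence, if this distance is avoided, then for `a ≠ b` either `b` is isolated in `E a`,
or `a` is isolated in `E b`, or both have degree one.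

Say that `a` beats `b` if `b` is not isolated in `E a` while `a` is isolated in `E b`. Awarding two
points for a win and one for a tie gives scores with sum `n (n - 1)`, and a coordinate with `p` wins
and `m` ties has `#(E a) ≤ p.choose 2 + m`, or `#(E a) ≤ m / 2` if `p = 0`. A coordinate beating all
others can be deleted at the cost of at most `(n - 1).choose 2` vectors. If there is none, then each
`#(E a)` is bounded by an affine function of the score of `a`, up to an error for the lowest scores
when `n = 6`. Summation gives the bounds `6`, `12`, `22` for `n = 4, 5, 6`.
-/

open scoped Classical

/-- `L m k l` is the set of vectors in `ℝ^(m+k+l)` with exactly `m` entries `-1`,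
`k` entries `0`, and `l` entries `1`. -/
def L (m k l : ℕ) : Set (EuclideanSpace ℝ (Fin (m+k+l))) :=
  {x | (Finset.univ.filter (fun i => x i = (-1:ℝ))).card = m ∧
       (Finset.univ.filter (fun i => x i = (0:ℝ))).card = k ∧
       (Finset.univ.filter (fun i => x i = (1:ℝ))).card = l}

open Finset

section Counting

variable {ι : Type*} [DecidableEq ι]

theorem sum_sum_erase_eq_card_mul_of_add_swap_eq_two {w : ι → ι → ℕ} {A : Finset ι}
    (hw : ∀ a ∈ A, ∀ b ∈ A, a ≠ b → w a b + w b a = 2) :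
    ∑ a ∈ A, ∑ b ∈ A.erase a, w a b = #A * (#A - 1) := by
  have sum_swap : ∑ a ∈ A, ∑ b ∈ A.erase a, w a b = ∑ a ∈ A, ∑ b ∈ A.erase a, w b a :=
    sum_comm' fun a b ↦ by simp only [mem_erase]; tauto
  have sum_add_swap : ∑ a ∈ A, ∑ b ∈ A.erase a, (w a b + w b a) = #A * ((#A - 1) * 2) := by
    rw [← smul_eq_mul, ← sum_const]
    refine sum_congr rfl fun a ha ↦ ?_
    rw [← card_erase_of_mem ha, ← smul_eq_mul, ← sum_const]
    exact sum_congr rfl fun b hb ↦ hw a ha b (mem_of_mem_erase hb) (ne_of_mem_erase hb).symm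
  simp only [sum_add_distrib, ← sum_swap, ← mul_assoc] at sum_add_swap
  lia

variable {𝓔 : Finset (Finset ι)} {P M : Finset ι}

theorem card_le_choose_two_add_card (hcard : ∀ e ∈ 𝓔, #e = 2) (hsub : ∀ e ∈ 𝓔, e ⊆ P ∪ M)
    (hM : ∀ b ∈ M, #{e ∈ 𝓔 | b ∈ e} ≤ 1) : #𝓔 ≤ (#P).choose 2 + #M := by
  have cover : 𝓔 ⊆ P.powersetCard 2 ∪ M.biUnion fun b ↦ {e ∈ 𝓔 | b ∈ e} := by
    intro e he
    by_cases heM : ∃ b ∈ M, b ∈ e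
    · obtain ⟨b, hb, hbe⟩ := heM
      exact mem_union_right _ (mem_biUnion.2 ⟨b, hb, mem_filter.2 ⟨he, hbe⟩⟩)
    · refine mem_union_left _ (mem_powersetCard.2 ⟨fun b hb ↦ ?_, hcard e he⟩)
      exact (mem_union.1 (hsub e he hb)).resolve_right fun h ↦ heM ⟨b, h, hb⟩
  calc #𝓔 ≤ #(P.powersetCard 2) + #(M.biUnion fun b ↦ {e ∈ 𝓔 | b ∈ e}) :=
        (card_le_card cover).trans (card_union_le _ _)
    _ ≤ (#P).choose 2 + #M := by
        rw [card_powersetCard]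
        simpa using card_biUnion_le_card_mul M _ 1 hM

theorem two_mul_card_le_card (hcard : ∀ e ∈ 𝓔, #e = 2) (hsub : ∀ e ∈ 𝓔, e ⊆ M)
    (hM : ∀ b ∈ M, #{e ∈ 𝓔 | b ∈ e} ≤ 1) : 2 * #𝓔 ≤ #M := by
  calc 2 * #𝓔 = ∑ e ∈ 𝓔, #{b ∈ M | b ∈ e} := by
        rw [mul_comm, ← smul_eq_mul, ← sum_const]
        refine sum_congr rfl fun e he ↦ ?_
        rw [filter_mem_eq_inter, inter_eq_right.2 (hsub e he), hcard e he]
    _ = ∑ b ∈ M, #{e ∈ 𝓔 | b ∈ e} :=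
        (sum_card_bipartiteAbove_eq_sum_card_bipartiteBelow fun b e ↦ b ∈ e).symm
    _ ≤ #M := by simpa using sum_le_card_nsmul M _ 1 hM

end Counting

section Links

variable {ι : Type*}

/-- In the tournament on coordinates, `a` beats `b` if some vector has entry `-1` at `a` and `1` at
`b`, but no vector has entry `-1` at `b` and `1` at `a`. It may be that neither beats the other. -/
def Beats (E : ι → Finset (Finset ι)) (a b : ι) : Prop :=
  (∃ e ∈ E a, b ∈ e) ∧ ∀ f ∈ E b, a ∉ f

theorem Beats.not_beats {E : ι → Finset (Finset ι)} {a b : ι} (h : Beats E a b) : ¬Beats E b a :=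
  fun ⟨⟨f, hf, haf⟩, _⟩ ↦ h.2 f hf haf

variable [DecidableEq ι]

/-- The combinatorial model of a subset of `L 1 k 2` without pairs at distance `√10`: the pair
`{b, c}` belongs to `E a` if the vector with entry `-1` at `a` and entries `1` at `b` and `c`
belongs to the set. All nonzero coordinates lie in `S`. -/
structure IsLinkSystem (E : ι → Finset (Finset ι)) (S : Finset ι) : Prop where
  card_eq_two : ∀ a ∈ S, ∀ e ∈ E a, #e = 2
  subset_erase : ∀ a ∈ S, ∀ e ∈ E a, e ⊆ S.erase a
  not_disjoint : ∀ a ∈ S, ∀ b ∈ S, ∀ e ∈ E a, ∀ f ∈ E b, b ∈ e → a ∈ f → ¬Disjoint e f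

/-- The coordinates in `S` that `a` beats. -/
noncomputable def wins (E : ι → Finset (Finset ι)) (S : Finset ι) (a : ι) : Finset ι :=
  {b ∈ S.erase a | Beats E a b}

/-- The coordinates in `S` that tie with `a`. -/
noncomputable def ties (E : ι → Finset (Finset ι)) (S : Finset ι) (a : ι) : Finset ι :=
  {b ∈ S.erase a | ¬Beats E a b ∧ ¬Beats E b a}

/-- The tournament score of `a` against the coordinates in `S`, with two points for a win and one
for a tie. -/
noncomputable def score (E : ι → Finset (Finset ι)) (S : Finset ι) (a : ι) : ℕ :=
  2 * #(wins E S a) + #(ties E S a)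

variable {E : ι → Finset (Finset ι)} {S A : Finset ι} {a b v : ι}

theorem card_wins_add_card_ties_le (ha : a ∈ S) : #(wins E S a) + #(ties E S a) ≤ #S - 1 := by
  have disj : Disjoint (wins E S a) (ties E S a) :=
    disjoint_filter.2 fun b _ hab htie ↦ htie.1 hab
  rw [← card_union_of_disjoint disj, ← card_erase_of_mem ha]
  exact card_le_card (union_subset (filter_subset _ _) (filter_subset _ _))

theorem score_eq_sum :
    score E S a = ∑ b ∈ S.erase a, if Beats E a b then 2 else if Beats E b a then 0 else 1 := by
  rw [score, wins, ties, card_filter, card_filter, mul_sum, ← sum_add_distrib]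
  refine sum_congr rfl fun b _ ↦ ?_
  by_cases hab : Beats E a b <;> by_cases hba : Beats E b a <;> simp [hab, hba]

theorem sum_score_self : ∑ a ∈ S, score E S a = #S * (#S - 1) := by
  simp only [score_eq_sum]
  refine sum_sum_erase_eq_card_mul_of_add_swap_eq_two fun a _ b _ _ ↦ ?_
  by_cases hab : Beats E a b
  · simp [hab, hab.not_beats]
  · by_cases hba : Beats E b a <;> simp [hab, hba]

theorem card_mul_card_sub_one_le_sum_score (hA : A ⊆ S) :
    #A * (#A - 1) ≤ ∑ a ∈ A, score E S a := by
  rw [← sum_score_self (E := E)]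
  simp only [score_eq_sum]
  exact sum_le_sum fun a _ ↦ sum_le_sum_of_subset (erase_subset_erase a hA)

theorem card_filter_score_le (t : ℕ) : #{a ∈ S | score E S a ≤ t} ≤ t + 1 := by
  have lower := card_mul_card_sub_one_le_sum_score (E := E) (filter_subset (score E S · ≤ t) S)
  have upper := sum_le_card_nsmul {a ∈ S | score E S a ≤ t} (score E S) t
    fun a ha ↦ (mem_filter.1 ha).2
  by_contra! hlt
  have := Nat.le_of_mul_le_mul_left (lower.trans upper) (by lia)
  lia

namespace IsLinkSystem

theorem card_filter_mem_le_one_of_mem (h : IsLinkSystem E S) {f : Finset ι} (ha : a ∈ S)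
    (hb : b ∈ S) (hf : f ∈ E b) (haf : a ∈ f) : #{e ∈ E a | b ∈ e} ≤ 1 := by
  obtain ⟨c, hc⟩ : ∃ c, f.erase a = {c} := by
    rw [← card_eq_one, card_erase_of_mem haf, h.card_eq_two b hb f hf]
  have eq_pair : ∀ e ∈ E a, b ∈ e → e = {b, c} := by
    intro e he hbe
    obtain ⟨d, hde, hdf⟩ := not_disjoint_iff.1 (h.not_disjoint a ha b hb e he f hf hbe haf)
    have hda : d ≠ a := ne_of_mem_erase (h.subset_erase a ha e he hde)
    have hdc : d = c := mem_singleton.1 (hc ▸ mem_erase.2 ⟨hda, hdf⟩)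
    have hbc : b ≠ c := by
      have : c ∈ f := mem_of_mem_erase (hc ▸ mem_singleton_self c)
      exact (ne_of_mem_erase (h.subset_erase b hb f hf this)).symm
    have hsub : {b, c} ⊆ e := insert_subset hbe (singleton_subset_iff.2 (hdc ▸ hde))
    refine (eq_of_subset_of_card_le hsub ?_).symm
    rw [h.card_eq_two a ha e he, card_pair hbc]
  refine card_le_one.2 fun e he e' he' ↦ ?_
  rw [mem_filter] at he he'
  rw [eq_pair e he.1 he.2, eq_pair e' he'.1 he'.2]

theorem card_filter_mem_le_one_of_mem_ties (h : IsLinkSystem E S) (ha : a ∈ S)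
    (hb : b ∈ ties E S a) : #{e ∈ E a | b ∈ e} ≤ 1 := by
  obtain ⟨hbS, hab, -⟩ := mem_filter.1 hb
  by_cases hE : ∃ e ∈ E a, b ∈ e
  · obtain ⟨f, hf, haf⟩ : ∃ f ∈ E b, a ∈ f := by
      by_contra! hno
      exact hab ⟨hE, hno⟩
    exact h.card_filter_mem_le_one_of_mem ha (mem_of_mem_erase hbS) hf haf
  · rw [filter_eq_empty_iff.2 fun e he hbe ↦ hE ⟨e, he, hbe⟩]
    simp

theorem subset_wins_union_ties (h : IsLinkSystem E S) (ha : a ∈ S) {e : Finset ι} (he : e ∈ E a) :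
    e ⊆ wins E S a ∪ ties E S a := by
  intro b hbe
  have hb := h.subset_erase a ha e he hbe
  have hba : ¬Beats E b a := fun hba ↦ hba.2 e he hbe
  by_cases hab : Beats E a b
  · exact mem_union_left _ (mem_filter.2 ⟨hb, hab⟩)
  · exact mem_union_right _ (mem_filter.2 ⟨hb, hab, hba⟩)

theorem card_le_choose_wins_add_ties (h : IsLinkSystem E S) (ha : a ∈ S) :
    #(E a) ≤ (#(wins E S a)).choose 2 + #(ties E S a) :=
  card_le_choose_two_add_card (h.card_eq_two a ha) (fun _ ↦ h.subset_wins_union_ties ha)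
    fun _ ↦ h.card_filter_mem_le_one_of_mem_ties ha

theorem two_mul_card_le_ties (h : IsLinkSystem E S) (ha : a ∈ S) (hwins : #(wins E S a) = 0) :
    2 * #(E a) ≤ #(ties E S a) := by
  refine two_mul_card_le_card (h.card_eq_two a ha) (fun e he ↦ ?_)
    fun _ ↦ h.card_filter_mem_le_one_of_mem_ties ha
  simpa [card_eq_zero.1 hwins] using h.subset_wins_union_ties ha he

theorem erase_of_forall_beats (h : IsLinkSystem E S) (hv : ∀ a ∈ S.erase v, Beats E v a) :
    IsLinkSystem E (S.erase v) where
  card_eq_two a ha := h.card_eq_two a (mem_of_mem_erase ha)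
  subset_erase a ha e he := by
    rw [erase_right_comm]
    exact Finset.subset_erase.2 ⟨h.subset_erase a (mem_of_mem_erase ha) e he, (hv a ha).2 e he⟩
  not_disjoint a ha b hb := h.not_disjoint a (mem_of_mem_erase ha) b (mem_of_mem_erase hb)

theorem erase_of_card_wins_eq (h : IsLinkSystem E S) (hv : v ∈ S) (hwins : #(wins E S v) = #S - 1) :
    IsLinkSystem E (S.erase v) := by
  rw [← card_erase_of_mem hv] at hwins
  exact h.erase_of_forall_beats (card_filter_eq_iff.1 hwins)

theorem card_le_choose_two (h : IsLinkSystem E S) (ha : a ∈ S) : #(E a) ≤ (#S - 1).choose 2 := by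
  rw [← card_erase_of_mem ha, ← card_powersetCard]
  exact card_le_card fun e he ↦
    mem_powersetCard.2 ⟨h.subset_erase a ha e he, h.card_eq_two a ha e he⟩

theorem sum_card_le_choose_two_add_sum_erase (h : IsLinkSystem E S) (hv : v ∈ S) :
    ∑ a ∈ S, #(E a) ≤ (#S - 1).choose 2 + ∑ a ∈ S.erase v, #(E a) := by
  rw [← add_sum_erase S _ hv]
  exact Nat.add_le_add_right (h.card_le_choose_two hv) _

theorem two_mul_card_le_score (h : IsLinkSystem E S) (hS : #S ≤ 4) (ha : a ∈ S) :
    2 * #(E a) ≤ score E S a := by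
  have hle := card_wins_add_card_ties_le (E := E) ha
  have hchoose := h.card_le_choose_wins_add_ties ha
  rw [Nat.choose_two_right] at hchoose
  have hties := h.two_mul_card_le_ties ha
  rw [score]
  have : #(wins E S a) ≤ 3 := by lia
  interval_cases #(wins E S a) <;> lia

theorem two_mul_card_le_score_add_one (h : IsLinkSystem E S) (hS : #S ≤ 5) (ha : a ∈ S)
    (hwins : #(wins E S a) ≠ 4) : 2 * #(E a) ≤ score E S a + 1 := by
  have hle := card_wins_add_card_ties_le (E := E) ha
  have hchoose := h.card_le_choose_wins_add_ties ha
  rw [Nat.choose_two_right] at hchoose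
  have hties := h.two_mul_card_le_ties ha
  rw [score]
  have : #(wins E S a) ≤ 3 := by lia
  interval_cases #(wins E S a) <;> lia

theorem card_add_two_le_score (h : IsLinkSystem E S) (hS : #S ≤ 6) (ha : a ∈ S)
    (hwins : #(wins E S a) ≠ 5) :
    #(E a) + 2 ≤ score E S a + (if score E S a ≤ 2 then 1 else 0)
      + (if score E S a ≤ 0 then 1 else 0) := by
  have hle := card_wins_add_card_ties_le (E := E) ha
  have hchoose := h.card_le_choose_wins_add_ties ha
  rw [Nat.choose_two_right] at hchoose
  have hties := h.two_mul_card_le_ties ha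
  rw [score]
  have : #(wins E S a) ≤ 4 := by lia
  interval_cases #(wins E S a) <;> split_ifs <;> lia

theorem sum_card_le_six (h : IsLinkSystem E S) (hS : #S = 4) : ∑ a ∈ S, #(E a) ≤ 6 := by
  have hsum := sum_le_sum fun a ha ↦ h.two_mul_card_le_score hS.le (a := a) ha
  rw [← mul_sum, sum_score_self, hS] at hsum
  lia

theorem sum_card_le_twelve (h : IsLinkSystem E S) (hS : #S = 5) : ∑ a ∈ S, #(E a) ≤ 12 := by
  by_cases hdom : ∃ v ∈ S, #(wins E S v) = 4
  · obtain ⟨v, hv, hwins⟩ := hdom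
    have herase := (h.erase_of_card_wins_eq hv (by rw [hwins, hS])).sum_card_le_six
      (by rw [card_erase_of_mem hv, hS])
    have hsplit := h.sum_card_le_choose_two_add_sum_erase hv
    rw [hS, Nat.choose_two_right] at hsplit
    lia
  · push Not at hdom
    have hsum := sum_le_sum fun a ha ↦ h.two_mul_card_le_score_add_one hS.le (a := a) ha (hdom a ha)
    rw [← mul_sum, sum_add_distrib, sum_score_self, sum_const, hS] at hsum
    lia

theorem sum_card_le_twenty_two (h : IsLinkSystem E S) (hS : #S = 6) : ∑ a ∈ S, #(E a) ≤ 22 := by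
  by_cases hdom : ∃ v ∈ S, #(wins E S v) = 5
  · obtain ⟨v, hv, hwins⟩ := hdom
    have herase := (h.erase_of_card_wins_eq hv (by rw [hwins, hS])).sum_card_le_twelve
      (by rw [card_erase_of_mem hv, hS])
    have hsplit := h.sum_card_le_choose_two_add_sum_erase hv
    rw [hS, Nat.choose_two_right] at hsplit
    lia
  · push Not at hdom
    have hsum := sum_le_sum fun a ha ↦ h.card_add_two_le_score hS.le (a := a) ha (hdom a ha)
    rw [sum_add_distrib, sum_add_distrib, sum_add_distrib, sum_score_self, ← card_filter,
      ← card_filter, sum_const, hS] at hsum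
    have hlow := card_filter_score_le (E := E) (S := S) 2
    have hzero := card_filter_score_le (E := E) (S := S) 0
    lia

end IsLinkSystem

end Links

section Vectors

/-- The set of coordinates at which `x` is `1`. -/
noncomputable def posSupport {ι : Type*} [Fintype ι] (x : EuclideanSpace ℝ ι) : Finset ι :=
  univ.filter fun i ↦ x i = 1

/-- The set of coordinates at which `x` is `-1`. -/
noncomputable def negSupport {ι : Type*} [Fintype ι] (x : EuclideanSpace ℝ ι) : Finset ι :=
  univ.filter fun i ↦ x i = -1

section SignVectors

variable {ι : Type*} [Fintype ι] {x y : EuclideanSpace ℝ ι} {i : ι}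

theorem mem_posSupport : i ∈ posSupport x ↔ x i = 1 := by simp [posSupport]

theorem mem_negSupport : i ∈ negSupport x ↔ x i = -1 := by simp [negSupport]

theorem disjoint_posSupport_negSupport : Disjoint (posSupport x) (negSupport x) :=
  disjoint_filter.2 fun i _ hpos hneg ↦ by linarith

variable [DecidableEq ι]

theorem apply_eq_ite_sub_ite (hx : ∀ i, x i = -1 ∨ x i = 0 ∨ x i = 1) :
    x i = (if i ∈ posSupport x then 1 else 0) - (if i ∈ negSupport x then 1 else 0) := by
  simp only [mem_posSupport, mem_negSupport]
  rcases hx i with h | h | h <;> norm_num [h]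

theorem inner_eq_card_inter_supports (hx : ∀ i, x i = -1 ∨ x i = 0 ∨ x i = 1)
    (hy : ∀ i, y i = -1 ∨ y i = 0 ∨ y i = 1) :
    inner ℝ x y = (#(posSupport x ∩ posSupport y) + #(negSupport x ∩ negSupport y) : ℝ)
      - (#(posSupport x ∩ negSupport y) + #(negSupport x ∩ posSupport y)) := by
  have card_inter (s t : Finset ι) :
      (#(s ∩ t) : ℝ) = ∑ i, (if i ∈ s then 1 else 0) * (if i ∈ t then 1 else 0) := by
    simp [← ite_and, ← mem_inter, inter_comm]
  simp only [PiLp.inner_apply, card_inter, ← sum_add_distrib, ← sum_sub_distrib]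
  refine sum_congr rfl fun i _ ↦ ?_
  rw [apply_eq_ite_sub_ite hx, apply_eq_ite_sub_ite hy, RCLike.inner_apply, conj_trivial]
  ring

end SignVectors

variable {m k l : ℕ} {x y : EuclideanSpace ℝ (Fin (m + k + l))}

theorem card_negSupport_of_mem_L (hx : x ∈ L m k l) : #(negSupport x) = m := hx.1

theorem card_posSupport_of_mem_L (hx : x ∈ L m k l) : #(posSupport x) = l := hx.2.2

theorem apply_eq_of_mem_L (hx : x ∈ L m k l) (i : Fin (m + k + l)) :
    x i = -1 ∨ x i = 0 ∨ x i = 1 := by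
  have hzero : univ.filter (fun i ↦ x i = 0) = (posSupport x ∪ negSupport x)ᶜ := by
    refine eq_of_subset_of_card_le (fun i hi ↦ ?_) ?_
    · simp [mem_posSupport, mem_negSupport, (mem_filter.1 hi).2]
    · rw [card_compl, card_union_of_disjoint disjoint_posSupport_negSupport, hx.2.1,
        card_posSupport_of_mem_L hx, card_negSupport_of_mem_L hx, Fintype.card_fin]
      lia
  have hi := Finset.ext_iff.1 hzero i
  simp only [mem_filter_univ, mem_compl, mem_union, mem_posSupport, mem_negSupport] at hi
  tauto

theorem eq_of_mem_L_of_supports_eq (hx : x ∈ L m k l) (hy : y ∈ L m k l)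
    (hneg : negSupport x = negSupport y) (hpos : posSupport x = posSupport y) : x = y := by
  ext i
  rw [apply_eq_ite_sub_ite (apply_eq_of_mem_L hx), apply_eq_ite_sub_ite (apply_eq_of_mem_L hy),
    hneg, hpos]

theorem finite_L : (L m k l).Finite :=
  Set.Finite.of_injOn (f := fun x ↦ (negSupport x, posSupport x)) (Set.mapsTo_univ _ _)
    (fun _ hx _ hy hxy ↦ eq_of_mem_L_of_supports_eq hx hy
      (Prod.ext_iff.1 hxy).1 (Prod.ext_iff.1 hxy).2)
    Set.finite_univ

theorem norm_sq_of_mem_L (hx : x ∈ L m k l) : ‖x‖ ^ 2 = m + l := by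
  rw [← real_inner_self_eq_norm_sq, inner_eq_card_inter_supports (apply_eq_of_mem_L hx)
    (apply_eq_of_mem_L hx), inter_self, inter_self, card_negSupport_of_mem_L hx,
    card_posSupport_of_mem_L hx, disjoint_iff_inter_eq_empty.1 disjoint_posSupport_negSupport,
    disjoint_iff_inter_eq_empty.1 disjoint_posSupport_negSupport.symm]
  simp [add_comm]

theorem dist_sq_of_mem_L (hx : x ∈ L m k l) (hy : y ∈ L m k l) :
    dist x y ^ 2 = 2 * (m + l)
      + 2 * (#(posSupport x ∩ negSupport y) + #(negSupport x ∩ posSupport y))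
      - 2 * (#(posSupport x ∩ posSupport y) + #(negSupport x ∩ negSupport y)) := by
  rw [dist_eq_norm, norm_sub_sq_real, norm_sq_of_mem_L hx, norm_sq_of_mem_L hy,
    inner_eq_card_inter_supports (apply_eq_of_mem_L hx) (apply_eq_of_mem_L hy)]
  ring

theorem dist_le_of_mem_L (hx : x ∈ L m k l) (hy : y ∈ L m k l) :
    dist x y ≤ √(6 * m + 2 * l) := by
  apply Real.le_sqrt_of_sq_le
  have hpos_neg : (#(posSupport x ∩ negSupport y) : ℝ) ≤ m := by
    exact_mod_cast (card_le_card inter_subset_right).trans_eq (card_negSupport_of_mem_L hy)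
  have hneg_pos : (#(negSupport x ∩ posSupport y) : ℝ) ≤ m := by
    exact_mod_cast (card_le_card inter_subset_left).trans_eq (card_negSupport_of_mem_L hx)
  rw [dist_sq_of_mem_L hx hy]
  linarith

theorem diam_L_le : Metric.diam (L m k l) ≤ √(6 * m + 2 * l) :=
  Metric.diam_le_of_forall_dist_le (Real.sqrt_nonneg _) fun _ hx _ hy ↦ dist_le_of_mem_L hx hy

end Vectors

section LinksOfVectors

/-- The positive supports of the vectors in `X` with entry `-1` at `a`. -/
noncomputable def links {ι : Type*} [Fintype ι] [DecidableEq ι] (X : Finset (EuclideanSpace ℝ ι))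
    (a : ι) : Finset (Finset ι) :=
  {x ∈ X | x a = -1}.image posSupport

variable {k l : ℕ} {x y : EuclideanSpace ℝ (Fin (1 + k + l))} {a b : Fin (1 + k + l)}
  {X : Finset (EuclideanSpace ℝ (Fin (1 + k + l)))}

theorem negSupport_eq_singleton_of_mem_L (hx : x ∈ L 1 k l) (ha : x a = -1) :
    negSupport x = {a} := by
  obtain ⟨c, hc⟩ := card_eq_one.1 (card_negSupport_of_mem_L hx)
  have : a ∈ negSupport x := mem_negSupport.2 ha
  rw [hc, mem_singleton] at this
  rw [hc, this]

theorem card_links (hX : ↑X ⊆ L 1 k l) (a : Fin (1 + k + l)) :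
    #(links X a) = #{x ∈ X | x a = -1} := by
  refine card_image_of_injOn fun x hx y hy hxy ↦ ?_
  obtain ⟨hxX, hxa⟩ := mem_filter.1 hx
  obtain ⟨hyX, hya⟩ := mem_filter.1 hy
  refine eq_of_mem_L_of_supports_eq (hX hxX) (hX hyX) ?_ hxy
  rw [negSupport_eq_singleton_of_mem_L (hX hxX) hxa, negSupport_eq_singleton_of_mem_L (hX hyX) hya]

theorem sum_card_links (hX : ↑X ⊆ L 1 k l) : ∑ a, #(links X a) = #X := by
  calc ∑ a, #(links X a) = ∑ a, #{x ∈ X | x a = -1} := sum_congr rfl fun a _ ↦ card_links hX a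
    _ = ∑ x ∈ X, #(negSupport x) := by
        simp only [negSupport, card_filter]
        exact sum_comm
    _ = #X := by
        rw [card_eq_sum_ones]
        exact sum_congr rfl fun x hx ↦ card_negSupport_of_mem_L (hX hx)

theorem not_disjoint_posSupport_of_dist_lt (hx : x ∈ L 1 k l) (hy : y ∈ L 1 k l)
    (hxa : x a = -1) (hxb : x b = 1) (hya : y a = 1) (hyb : y b = -1)
    (hdist : dist x y < √(6 + 2 * l)) : ¬Disjoint (posSupport x) (posSupport y) := by
  intro hdisj
  have hab : a ≠ b := by rintro rfl; linarith
  have hsq : dist x y ^ 2 = 6 + 2 * l := by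
    rw [dist_sq_of_mem_L hx hy, negSupport_eq_singleton_of_mem_L hx hxa,
      negSupport_eq_singleton_of_mem_L hy hyb, inter_singleton_of_mem (mem_posSupport.2 hxb),
      singleton_inter_of_mem (mem_posSupport.2 hya), disjoint_iff_inter_eq_empty.1 hdisj,
      singleton_inter_of_notMem (notMem_singleton.2 hab)]
    simp only [card_singleton, card_empty, Nat.cast_one, Nat.cast_zero]
    ring
  exact hdist.ne (by rw [← hsq, Real.sqrt_sq dist_nonneg])

theorem isLinkSystem_links {X : Finset (EuclideanSpace ℝ (Fin (1 + k + 2)))} (hX : ↑X ⊆ L 1 k 2)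
    (hdist : ∀ x ∈ X, ∀ y ∈ X, dist x y < √10) : IsLinkSystem (links X) univ where
  card_eq_two a _ e he := by
    obtain ⟨x, hx, rfl⟩ := mem_image.1 he
    exact card_posSupport_of_mem_L (hX (mem_filter.1 hx).1)
  subset_erase a _ e he := by
    obtain ⟨x, hx, rfl⟩ := mem_image.1 he
    refine Finset.subset_erase.2 ⟨subset_univ _, fun ha ↦ ?_⟩
    linarith [mem_posSupport.1 ha, (mem_filter.1 hx).2]
  not_disjoint a _ b _ e he f hf hbe haf := by
    obtain ⟨x, hx, rfl⟩ := mem_image.1 he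
    obtain ⟨y, hy, rfl⟩ := mem_image.1 hf
    obtain ⟨hxX, hxa⟩ := mem_filter.1 hx
    obtain ⟨hyX, hyb⟩ := mem_filter.1 hy
    refine not_disjoint_posSupport_of_dist_lt (hX hxX) (hX hyX) hxa (mem_posSupport.1 hbe)
      (mem_posSupport.1 haf) hyb ((hdist x hxX y hyX).trans_eq ?_)
    norm_num

end LinksOfVectors

theorem stmt_16 (X : Set (EuclideanSpace ℝ (Fin (1+3+2)))) (hX : X ⊆ L 1 3 2)
    (hD : Metric.diam X < Metric.diam (L 1 3 2)) : X.ncard ≤ 22 := by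
  have hfin : X.Finite := finite_L.subset hX
  have hdiam : Metric.diam (L 1 3 2) ≤ √10 := diam_L_le.trans_eq (by norm_num)
  have hdist : ∀ x ∈ X, ∀ y ∈ X, dist x y < √10 := fun x hx y hy ↦
    (Metric.dist_le_diam_of_mem hfin.isBounded hx hy).trans_lt (hD.trans_le hdiam)
  lift X to Finset (EuclideanSpace ℝ (Fin (1 + 3 + 2))) using hfin
  rw [Set.ncard_coe_finset, ← sum_card_links hX]
  exact (isLinkSystem_links hX hdist).sum_card_le_twenty_two (by simp)
end

section
/- For every k ≥ 1, if X ⊆ L_{1k2} satisfies D(X) < D(L_{1k2}), then |X| ≤ binomial(k+3,3) + 2. Moreover this bound is attained, e.g., by the set X_k = T_k(k+1) ∪ (⋃_{i=1}^{k+1} S_k(i)), where S_k(i) = {x ∈ L_{1k2} : x_1 = ... = x_{i-1} = 0, x_i = -1} and T_k(i) = {x ∈ L_{1k2} : x_1 = ... = x_{i-1} = 0, x_i = 1}. -/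
open scoped Classical

/-- `Sset k i` is `S_k(i+1)` of the paper (0-indexed): vectors of `L 1 k 2` whose
first `i` coordinates are `0` and whose `(i+1)`-st coordinate is `-1`. -/
def Sset (k i : ℕ) : Set (EuclideanSpace ℝ (Fin (1+k+2))) :=
  {x ∈ L 1 k 2 | (∀ j : Fin (1+k+2), (j : ℕ) < i → x j = 0) ∧
    (∀ j : Fin (1+k+2), (j : ℕ) = i → x j = -1)}

/-- `Tset k i` is `T_k(i+1)` of the paper (0-indexed): vectors of `L 1 k 2` whose
first `i` coordinates are `0` and whose `(i+1)`-st coordinate is `1`. -/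
def Tset (k i : ℕ) : Set (EuclideanSpace ℝ (Fin (1+k+2))) :=
  {x ∈ L 1 k 2 | (∀ j : Fin (1+k+2), (j : ℕ) < i → x j = 0) ∧
    (∀ j : Fin (1+k+2), (j : ℕ) = i → x j = 1)}

/-- `Xk k` is the paper's `X_k = T_k(k+1) ∪ ⋃_{i=1}^{k+1} S_k(i)`. -/
def Xk (k : ℕ) : Set (EuclideanSpace ℝ (Fin (1+k+2))) :=
  Tset k k ∪ ⋃ i ∈ Finset.range (k+1), Sset k i

/-!
A vector of `L_{1k2}` is a pair `(T, a)`, where `T` is its three-element support and `a ∈ T` the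
position of its entry `-1`. The distance `√10` is attained by `(S, a)` and `(T, b)` exactly when
`S ≠ T`, `a ≠ b` and `a, b ∈ S ∩ T`; call this a conflict.

Let `F` be a conflict-free family, say that `a` is a root of `T` if `(T, a) ∈ F`, and that `a` is
locked if some triple has `a` and another vertex as roots. If `a ≠ b` are roots of `T`, `d ∉ T`, and
no triple with root `d` contains `a`, then `{a, b, d}` has no roots, and trading `(T, b)` for
`({a, b, d}, a)` gives another conflict-free family of the same size, with one more rooted triple.
Once no such trade is left, any two locked vertices are roots of a common triple, which is unique.
So if `A` is the set of locked vertices, every triple inside `A` has no roots or three. A triple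
with `w` roots therefore satisfies `w + [T ⊆ A] ≤ 1 + (w choose 2)`, and summing over all triples
gives `|F| + (|A| choose 3) ≤ (n choose 3) + (|A| choose 2) ≤ (n choose 3) + (|A| choose 3) + 2`.
-/

section PointedTriples

open Finset

variable {V : Type*}

/-- Two pointed sets `(S, a)` and `(T, b)` conflict if `S ≠ T` share the two distinct points `a`
and `b`. For three-element sets this is the configuration at distance `√10`. -/
def Conflict (p q : Finset V × V) : Prop :=
  p.1 ≠ q.1 ∧ p.2 ≠ q.2 ∧ p.2 ∈ q.1 ∧ q.2 ∈ p.1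

/-- A family of pointed sets, no two of which conflict. -/
def ConflictFree (F : Finset (Finset V × V)) : Prop :=
  ∀ p ∈ F, ∀ q ∈ F, ¬ Conflict p q

/-- A family admits no trade of `(T, b)` for `({a, b, d}, a)`: whenever `a ≠ b` are roots of `T`
and `d ∉ T`, some set with root `d` contains `a`. -/
def IsSaturated (F : Finset (Finset V × V)) : Prop :=
  ∀ ⦃T a b d⦄, (T, a) ∈ F → (T, b) ∈ F → a ≠ b → d ∉ T → ∃ S, (S, d) ∈ F ∧ a ∈ S

lemma Conflict.symm {p q : Finset V × V} (h : Conflict p q) : Conflict q p :=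
  ⟨h.1.symm, h.2.1.symm, h.2.2.2, h.2.2.1⟩

lemma not_conflict_self (p : Finset V × V) : ¬ Conflict p p := fun h ↦ h.1 rfl

lemma ConflictFree.eq_of_mem {F : Finset (Finset V × V)} (hF : ConflictFree F) {S T : Finset V}
    {a b : V} (hS : (S, a) ∈ F) (hT : (T, b) ∈ F) (hab : a ≠ b) (haT : a ∈ T) (hbS : b ∈ S) :
    S = T := by
  by_contra hST
  exact hF _ hS _ hT ⟨hST, hab, haT, hbS⟩

lemma ConflictFree.exists_common_set {F : Finset (Finset V × V)} (hfree : ConflictFree F)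
    {S T : Finset V} {a b : V} (hS : (S, a) ∈ F) (hT : (T, b) ∈ F) (hab : a ≠ b)
    (hbS : b ∈ S) (haT : a ∈ T) : ∃ U, (U, a) ∈ F ∧ (U, b) ∈ F :=
  ⟨S, hS, hfree.eq_of_mem hS hT hab haT hbS ▸ hT⟩

lemma ConflictFree.trade [DecidableEq V] {F : Finset (Finset V × V)} (hfree : ConflictFree F)
    {T : Finset V} {a b d : V} (haT : (T, a) ∈ F) (hbT : b ∈ T) (hda : ∀ S, (S, d) ∈ F → a ∉ S) :
    ConflictFree (insert ({a, b, d}, a) (F.erase (T, b))) := by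
  have hnew : ∀ q ∈ F.erase (T, b), ¬ Conflict ({a, b, d}, a) q := by
    rintro ⟨S, s⟩ hq ⟨-, has, haS, hs⟩
    obtain ⟨hqT, hqF⟩ := mem_erase.1 hq
    simp only [mem_insert, mem_singleton] at hs has haS
    obtain rfl | rfl | rfl := hs
    · exact has rfl
    · exact hqT (by rw [hfree.eq_of_mem hqF haT has.symm hbT haS])
    · exact hda S hqF haS
  intro p hp q hq
  obtain rfl | hp := mem_insert.1 hp <;> obtain rfl | hq := mem_insert.1 hq
  · exact not_conflict_self _
  · exact hnew q hq
  · exact fun h ↦ hnew p hp h.symm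
  · exact hfree p (mem_of_mem_erase hp) q (mem_of_mem_erase hq)

variable [Fintype V] [DecidableEq V]

variable (V) in
/-- The pairs `(T, a)` of a three-element set `T` and a point `a ∈ T`. -/
def pointedTriples : Finset (Finset V × V) := {p | #p.1 = 3 ∧ p.2 ∈ p.1}

/-- The points `a` for which `(T, a)` belongs to the family. -/
def rootsOf (F : Finset (Finset V × V)) (T : Finset V) : Finset V := {a | (T, a) ∈ F}

/-- The points that are, together with some other point, roots of a common set. -/
noncomputable def lockedVertices (F : Finset (Finset V × V)) : Finset V :=
  {a | ∃ b, a ≠ b ∧ ∃ T, (T, a) ∈ F ∧ (T, b) ∈ F}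

lemma mem_pointedTriples {T : Finset V} {a : V} :
    (T, a) ∈ pointedTriples V ↔ #T = 3 ∧ a ∈ T := by
  simp [pointedTriples]

lemma mem_rootsOf {F : Finset (Finset V × V)} {T : Finset V} {a : V} :
    a ∈ rootsOf F T ↔ (T, a) ∈ F := by
  simp [rootsOf]

lemma mem_lockedVertices {F : Finset (Finset V × V)} {a : V} :
    a ∈ lockedVertices F ↔ ∃ b, a ≠ b ∧ ∃ T, (T, a) ∈ F ∧ (T, b) ∈ F := by
  simp [lockedVertices]

lemma rootsOf_subset {F : Finset (Finset V × V)} (hF : F ⊆ pointedTriples V) (T : Finset V) :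
    rootsOf F T ⊆ T :=
  fun _ ha ↦ (mem_pointedTriples.1 (hF (mem_rootsOf.1 ha))).2

lemma card_eq_sum_card_rootsOf {F : Finset (Finset V × V)} (hF : F ⊆ pointedTriples V) :
    #F = ∑ T ∈ powersetCard 3 univ, #(rootsOf F T) := by
  have hmaps : Set.MapsTo Prod.fst (F : Set (Finset V × V)) (powersetCard 3 (univ : Finset V)) :=
    fun p hp ↦ by simpa using (mem_pointedTriples.1 (hF hp)).1
  have hfiber (T : Finset V) : {p ∈ F | p.1 = T} = (rootsOf F T).image (Prod.mk T) := by
    ext ⟨S, a⟩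
    simp only [mem_filter, mem_image, mem_rootsOf, Prod.mk.injEq]
    grind
  simp only [card_eq_sum_card_fiberwise hmaps, hfiber,
    card_image_of_injective _ (Prod.mk_right_injective _)]

namespace ConflictFree

variable {F : Finset (Finset V × V)}

lemma rootsOf_trade_eq_empty (hF : F ⊆ pointedTriples V) (hfree : ConflictFree F) {T : Finset V}
    {a b d : V} (haT : (T, a) ∈ F) (hbT : (T, b) ∈ F) (hab : a ≠ b) (hd : d ∉ T)
    (hda : ∀ S, (S, d) ∈ F → a ∉ S) : rootsOf F {a, b, d} = ∅ := by
  have hamem := rootsOf_subset hF T (mem_rootsOf.2 haT)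
  have hbmem := rootsOf_subset hF T (mem_rootsOf.2 hbT)
  have hne : ({a, b, d} : Finset V) ≠ T := fun h ↦ hd (h ▸ by simp)
  refine eq_empty_of_forall_notMem fun s hs ↦ ?_
  have hsmem := rootsOf_subset hF _ hs
  rw [mem_rootsOf] at hs
  simp only [mem_insert, mem_singleton] at hsmem
  obtain rfl | rfl | rfl := hsmem
  · exact hne (hfree.eq_of_mem hs hbT hab hamem (by simp))
  · exact hne (hfree.eq_of_mem hs haT hab.symm hbmem (by simp))
  · exact hda _ hs (by simp)

lemma exists_more_rooted_of_not_isSaturated (hF : F ⊆ pointedTriples V) (hfree : ConflictFree F)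
    (hsat : ¬ IsSaturated F) :
    ∃ G ⊆ pointedTriples V, ConflictFree G ∧ #G = #F ∧
      #(F.image Prod.fst) < #(G.image Prod.fst) := by
  simp only [IsSaturated, not_forall, not_exists, not_and] at hsat
  obtain ⟨T, a, b, d, haT, hbT, hab, hd, hda⟩ := hsat
  have hamem := rootsOf_subset hF T (mem_rootsOf.2 haT)
  have hbmem := rootsOf_subset hF T (mem_rootsOf.2 hbT)
  have hempty := rootsOf_trade_eq_empty hF hfree haT hbT hab hd hda
  have hrootless (s : V) : (({a, b, d} : Finset V), s) ∉ F := fun h ↦ by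
    simpa [hempty] using mem_rootsOf.2 h
  have hcard : #{a, b, d} = 3 :=
    card_eq_three.2 ⟨a, b, d, hab, fun h ↦ hd (h ▸ hamem), fun h ↦ hd (h ▸ hbmem), rfl⟩
  refine ⟨insert ({a, b, d}, a) (F.erase (T, b)), ?_, hfree.trade haT hbmem hda, ?_, ?_⟩
  · exact insert_subset (mem_pointedTriples.2 ⟨hcard, by simp⟩) ((erase_subset _ _).trans hF)
  · rw [card_insert_of_notMem fun h ↦ hrootless a (mem_of_mem_erase h), card_erase_add_one hbT]
  · refine card_lt_card ((ssubset_iff_of_subset fun S hS ↦ ?_).2 ⟨{a, b, d}, by simp, ?_⟩)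
    · obtain ⟨⟨S, s⟩, hs, rfl⟩ := mem_image.1 hS
      by_cases hST : (S, s) = (T, b)
      · exact mem_image.2 ⟨(T, a), by grind, by grind⟩
      · exact mem_image_of_mem _ (mem_insert_of_mem (mem_erase.2 ⟨hST, hs⟩))
    · simpa using hrootless

lemma exists_isSaturated (hF : F ⊆ pointedTriples V) (hfree : ConflictFree F) :
    ∃ G ⊆ pointedTriples V, ConflictFree G ∧ #G = #F ∧ IsSaturated G := by
  obtain ⟨G, ⟨hG, hGfree, hGF⟩, hmax⟩ := Set.exists_max_image
    {G | G ⊆ pointedTriples V ∧ ConflictFree G ∧ #G = #F} (fun G ↦ #(G.image Prod.fst))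
    (Set.toFinite _) ⟨F, hF, hfree, rfl⟩
  refine ⟨G, hG, hGfree, hGF, by_contra fun hsat ↦ ?_⟩
  obtain ⟨H, hH, hHfree, hHG, hlt⟩ := exists_more_rooted_of_not_isSaturated hG hGfree hsat
  exact (hmax H ⟨hH, hHfree, hHG.trans hGF⟩).not_gt hlt

lemma exists_mem_of_mem_lockedVertices (hF : F ⊆ pointedTriples V) (hfree : ConflictFree F)
    (hsat : IsSaturated F) {a c : V} (ha : a ∈ lockedVertices F) (hc : c ∈ lockedVertices F)
    (hac : a ≠ c) : ∃ S, (S, c) ∈ F ∧ a ∈ S := by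
  obtain ⟨b, hab, T, haT, hbT⟩ := mem_lockedVertices.1 ha
  obtain ⟨e, hce, U, hcU, heU⟩ := mem_lockedVertices.1 hc
  obtain ⟨hT3, hamem⟩ := mem_pointedTriples.1 (hF haT)
  have hbmem := (mem_pointedTriples.1 (hF hbT)).2
  have hemem := (mem_pointedTriples.1 (hF heU)).2
  by_cases hcT : c ∉ T
  · exact hsat haT hbT hab hcT
  -- If `c ∈ T`, saturation goes through the partner `e` of `c`, which must lie outside `T`: it
  -- gives a set `W` with roots `a` and `e`, and `W` cannot contain `c`.
  by_contra! hca
  have haU : a ∉ U := hca U hcU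
  have hcb : c ≠ b := fun h ↦ hca T (h ▸ hbT) hamem
  have hTeq : T = {a, b, c} := by
    refine (eq_of_subset_of_card_le (by grind) ?_).symm
    rw [hT3, card_eq_three.2 ⟨a, b, c, hab, hac, hcb.symm, rfl⟩]
  have heT : e ∉ T := by
    intro heT
    have heb : e = b := by grind
    subst heb
    exact haU (hfree.eq_of_mem hbT hcU hcb.symm hemem (not_not.1 hcT) ▸ hamem)
  obtain ⟨S₁, heS₁, haS₁⟩ := hsat haT hbT hab heT
  obtain ⟨S₂, haS₂, heS₂⟩ := hsat heU hcU hce.symm haU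
  obtain ⟨W, haW, heW⟩ := hfree.exists_common_set haS₂ heS₁ (by grind) heS₂ haS₁
  have haW' := (mem_pointedTriples.1 (hF haW)).2
  have hcW : c ∉ W := fun hcW ↦
    haU (hfree.eq_of_mem heW hcU hce.symm hemem hcW ▸ haW')
  obtain ⟨S, hcS, haS⟩ := hsat haW heW (by grind) hcW
  exact hca S hcS haS

lemma exists_common_set_of_mem_lockedVertices (hF : F ⊆ pointedTriples V) (hfree : ConflictFree F)
    (hsat : IsSaturated F) {a c : V} (ha : a ∈ lockedVertices F) (hc : c ∈ lockedVertices F)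
    (hac : a ≠ c) : ∃ U, (U, a) ∈ F ∧ (U, c) ∈ F := by
  obtain ⟨S, hS, haS⟩ := exists_mem_of_mem_lockedVertices hF hfree hsat ha hc hac
  obtain ⟨T, hT, hcT⟩ := exists_mem_of_mem_lockedVertices hF hfree hsat hc ha hac.symm
  exact hfree.exists_common_set hT hS hac hcT haS

lemma rootsOf_eq_of_subset_lockedVertices (hF : F ⊆ pointedTriples V) (hfree : ConflictFree F)
    (hsat : IsSaturated F) {T : Finset V} (hT : T ⊆ lockedVertices F)
    (hne : (rootsOf F T).Nonempty) : rootsOf F T = T := by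
  refine (rootsOf_subset hF T).antisymm fun c hc ↦ ?_
  obtain ⟨a, ha⟩ := hne
  have haT := rootsOf_subset hF T ha
  obtain rfl | hac := eq_or_ne a c
  · exact ha
  obtain ⟨U, haU, hcU⟩ :=
    exists_common_set_of_mem_lockedVertices hF hfree hsat (hT haT) (hT hc) hac
  have haU' := rootsOf_subset hF U (mem_rootsOf.2 haU)
  exact mem_rootsOf.2 (hfree.eq_of_mem (mem_rootsOf.1 ha) hcU hac haU' hc ▸ hcU)

lemma card_rootsOf_add_le (hF : F ⊆ pointedTriples V) (hfree : ConflictFree F)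
    (hsat : IsSaturated F) {T : Finset V} (hT : #T = 3) :
    #(rootsOf F T) + (if T ⊆ lockedVertices F then 1 else 0) ≤ 1 + (#(rootsOf F T)).choose 2 := by
  have hle : #(rootsOf F T) ≤ 3 := hT ▸ card_le_card (rootsOf_subset hF T)
  have hfull (h : T ⊆ lockedVertices F) : #(rootsOf F T) = 0 ∨ #(rootsOf F T) = 3 := by
    obtain hempty | hne := (rootsOf F T).eq_empty_or_nonempty
    · exact .inl (by rw [hempty, card_empty])
    · exact .inr (by rw [rootsOf_eq_of_subset_lockedVertices hF hfree hsat h hne, hT])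
  split_ifs with h
  · obtain h0 | h3 := hfull h
    · simp [h0]
    · simp [h3]
  · interval_cases #(rootsOf F T) <;> decide

lemma sum_choose_two_card_rootsOf_le (hF : F ⊆ pointedTriples V) (hfree : ConflictFree F)
    (P : Finset (Finset V)) :
    ∑ T ∈ P, (#(rootsOf F T)).choose 2 ≤ (#(lockedVertices F)).choose 2 := by
  have hdisj : (P : Set (Finset V)).PairwiseDisjoint fun T ↦ powersetCard 2 (rootsOf F T) := by
    refine fun S _ T _ hST ↦ disjoint_left.2 fun e heS heT ↦ hST ?_
    rw [mem_powersetCard] at heS heT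
    obtain ⟨a, b, hab, rfl⟩ := card_eq_two.1 heS.2
    have haS : a ∈ rootsOf F S := heS.1 (by simp)
    have hbS : b ∈ rootsOf F S := heS.1 (by simp)
    have haT : a ∈ rootsOf F T := heT.1 (by simp)
    have hbT : b ∈ rootsOf F T := heT.1 (by simp)
    exact hfree.eq_of_mem (mem_rootsOf.1 haS) (mem_rootsOf.1 hbT) hab
      (rootsOf_subset hF T haT) (rootsOf_subset hF S hbS)
  simp only [← card_powersetCard]
  rw [← card_biUnion hdisj]
  refine card_le_card (biUnion_subset.2 fun T _ e he ↦ ?_)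
  obtain ⟨hsub, hcard⟩ := mem_powersetCard.1 he
  refine mem_powersetCard.2 ⟨fun a ha ↦ ?_, hcard⟩
  obtain ⟨b, hb, hba⟩ := exists_mem_ne (by omega : 1 < #e) a
  exact mem_lockedVertices.2
    ⟨b, hba.symm, T, mem_rootsOf.1 (hsub ha), mem_rootsOf.1 (hsub hb)⟩

end ConflictFree

lemma choose_two_le_choose_three_add_two (m : ℕ) : m.choose 2 ≤ m.choose 3 + 2 := by
  obtain hm | hm := lt_or_ge m 6
  · interval_cases m <;> decide
  · exact (Nat.choose_le_succ_of_lt_half_left (by omega)).trans (Nat.le_add_right _ _)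

theorem ConflictFree.card_le {F : Finset (Finset V × V)} (hF : F ⊆ pointedTriples V)
    (hfree : ConflictFree F) : #F ≤ (Fintype.card V).choose 3 + 2 := by
  obtain ⟨G, hG, hGfree, hGF, hsat⟩ := exists_isSaturated hF hfree
  rw [← hGF]
  have hinside : ∑ T ∈ powersetCard 3 (univ : Finset V),
      (if T ⊆ lockedVertices G then 1 else 0) = (#(lockedVertices G)).choose 3 := by
    rw [← card_filter, ← card_powersetCard]
    congr 1
    ext T
    simp [mem_powersetCard, and_comm]
  have hsum : #G + (#(lockedVertices G)).choose 3 ≤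
      (Fintype.card V).choose 3 + (#(lockedVertices G)).choose 2 := by
    calc #G + (#(lockedVertices G)).choose 3
        = ∑ T ∈ powersetCard 3 univ,
            (#(rootsOf G T) + if T ⊆ lockedVertices G then 1 else 0) := by
          rw [sum_add_distrib, hinside, ← card_eq_sum_card_rootsOf hG]
      _ ≤ ∑ T ∈ powersetCard 3 univ, (1 + (#(rootsOf G T)).choose 2) :=
          sum_le_sum fun T hT ↦ card_rootsOf_add_le hG hGfree hsat (mem_powersetCard.1 hT).2
      _ ≤ (Fintype.card V).choose 3 + (#(lockedVertices G)).choose 2 := by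
          rw [sum_add_distrib, ← card_eq_sum_ones, card_powersetCard, card_univ]
          gcongr
          exact sum_choose_two_card_rootsOf_le hG hGfree _
  have := choose_two_le_choose_three_add_two #(lockedVertices G)
  omega

lemma exists_conflict_mem_pointedTriples (hV : 4 ≤ Fintype.card V) :
    ∃ p ∈ pointedTriples V, ∃ q ∈ pointedTriples V, Conflict p q := by
  obtain ⟨f⟩ : Nonempty (Fin 4 ↪ V) := Function.Embedding.nonempty_of_card_le (by simpa)
  refine ⟨(map f {0, 1, 2}, f 0), ?_, (map f {0, 1, 3}, f 1), ?_, ?_, ?_, ?_, ?_⟩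
  · exact mem_pointedTriples.2 ⟨by rw [card_map]; rfl, by simp⟩
  · exact mem_pointedTriples.2 ⟨by rw [card_map]; rfl, by simp⟩
  · exact (map_injective f).ne (by decide)
  · exact f.injective.ne (by decide)
  · simp
  · simp

end PointedTriples

section SignVector

open Finset

variable {ι : Type*} [DecidableEq ι]

/-- The vector with entry `-1` at `p.2`, entries `1` on the rest of `p.1`, and `0` elsewhere. -/
noncomputable def signVec (p : Finset ι × ι) : EuclideanSpace ℝ ι :=
  WithLp.toLp 2 fun i ↦ if i = p.2 then -1 else if i ∈ p.1 then 1 else 0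

lemma signVec_apply (p : Finset ι × ι) (i : ι) :
    signVec p i = if i = p.2 then -1 else if i ∈ p.1 then 1 else 0 := rfl

lemma signVec_eq_neg_one_iff {p : Finset ι × ι} {i : ι} : signVec p i = -1 ↔ i = p.2 := by
  rw [signVec_apply]
  split_ifs <;> norm_num [*]

lemma signVec_eq_one_iff {p : Finset ι × ι} {i : ι} : signVec p i = 1 ↔ i ∈ p.1.erase p.2 := by
  rw [signVec_apply, mem_erase]
  split_ifs <;> norm_num [*]

lemma signVec_eq_zero_iff {p : Finset ι × ι} (hp : p.2 ∈ p.1) {i : ι} :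
    signVec p i = 0 ↔ i ∉ p.1 := by
  rw [signVec_apply]
  split_ifs with h <;> simp [*]

lemma injOn_signVec : Set.InjOn signVec {p : Finset ι × ι | p.2 ∈ p.1} := by
  intro p hp q hq h
  have hsupp : p.1 = q.1 := by
    ext i
    rw [← not_iff_not, ← signVec_eq_zero_iff hp, ← signVec_eq_zero_iff hq, h]
  have hroot : p.2 = q.2 := signVec_eq_neg_one_iff.1 (h ▸ signVec_eq_neg_one_iff.2 rfl)
  exact Prod.ext hsupp hroot

variable [Fintype ι]

lemma injOn_signVec_pointedTriples : Set.InjOn signVec (pointedTriples ι : Set (Finset ι × ι)) :=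
  injOn_signVec.mono fun _ hp ↦ (mem_pointedTriples.1 hp).2

lemma dist_sq_signVec {S T : Finset ι} {a b : ι} (ha : a ∈ S) (hb : b ∈ T) :
    dist (signVec (S, a)) (signVec (T, b)) ^ 2 =
      #S + #T - 2 * #(S ∩ T) + 4 * (if a ∈ T then 1 else 0) + 4 * (if b ∈ S then 1 else 0)
        - 8 * (if a = b then 1 else 0) := by
  have hcoord (i : ι) : dist (signVec (S, a) i) (signVec (T, b) i) ^ 2 =
      (if i ∈ S then 1 else 0) + (if i ∈ T then 1 else 0) - 2 * (if i ∈ S ∩ T then 1 else 0)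
        + 4 * (if a = i then if a ∈ T then 1 else 0 else 0)
        + 4 * (if b = i then if b ∈ S then 1 else 0 else 0)
        - 8 * (if a = i then if a = b then 1 else 0 else 0) := by
    rw [Real.dist_eq, sq_abs]
    simp only [signVec_apply, mem_inter]
    grind
  simp only [EuclideanSpace.dist_sq_eq, hcoord, sum_add_distrib, sum_sub_distrib, ← mul_sum,
    sum_boole, sum_ite_eq, mem_univ, if_true, filter_mem_eq_inter, univ_inter]

lemma dist_signVec_of_conflict {p q : Finset ι × ι} (hp : p ∈ pointedTriples ι)
    (hq : q ∈ pointedTriples ι) (h : Conflict p q) : dist (signVec p) (signVec q) = √10 := by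
  obtain ⟨S, a⟩ := p
  obtain ⟨T, b⟩ := q
  obtain ⟨hS, ha⟩ := mem_pointedTriples.1 hp
  obtain ⟨hT, hb⟩ := mem_pointedTriples.1 hq
  obtain ⟨hST, hab, haT, hbS⟩ : S ≠ T ∧ a ≠ b ∧ a ∈ T ∧ b ∈ S := h
  have hinter : #(S ∩ T) = 2 := by
    have hlower : #{a, b} ≤ #(S ∩ T) := card_le_card (by grind)
    have hupper : #(S ∩ T) ≠ 3 := fun h ↦ hST <|
      (eq_of_subset_of_card_le inter_subset_left (by omega)).symm.trans
        (eq_of_subset_of_card_le inter_subset_right (by omega))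
    have := card_le_card (inter_subset_left : S ∩ T ⊆ S)
    rw [card_pair hab] at hlower
    omega
  have hsq := dist_sq_signVec ha hb
  rw [hinter, hS, hT, if_pos haT, if_pos hbS, if_neg hab] at hsq
  rw [← Real.sqrt_sq dist_nonneg, hsq]
  norm_num

lemma dist_signVec_le_of_not_conflict {p q : Finset ι × ι} (hp : p ∈ pointedTriples ι)
    (hq : q ∈ pointedTriples ι) (h : ¬ Conflict p q) : dist (signVec p) (signVec q) ≤ √8 := by
  obtain ⟨S, a⟩ := p
  obtain ⟨T, b⟩ := q
  obtain ⟨hS, ha⟩ := mem_pointedTriples.1 hp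
  obtain ⟨hT, hb⟩ := mem_pointedTriples.1 hq
  apply Real.le_sqrt_of_sq_le
  rw [dist_sq_signVec ha hb, hS, hT]
  have hinter_pos (c : ι) (hcS : c ∈ S) (hcT : c ∈ T) : (1 : ℝ) ≤ #(S ∩ T) := by
    exact_mod_cast card_pos.2 ⟨c, mem_inter.2 ⟨hcS, hcT⟩⟩
  by_cases hab : a = b
  · subst hab
    have := hinter_pos a ha hb
    norm_num [ha, hb]
    linarith
  by_cases haT : a ∈ T <;> by_cases hbS : b ∈ S
  · have hST : S = T := by_contra fun hST ↦ h ⟨hST, hab, haT, hbS⟩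
    subst hST
    norm_num [hab, haT, hbS, hS]
  · have := hinter_pos a ha haT
    norm_num [hab, haT, hbS]
    linarith
  · have := hinter_pos b hbS hb
    norm_num [hab, haT, hbS]
    linarith
  · norm_num [hab, haT, hbS]
    linarith [(Nat.cast_nonneg #(S ∩ T) : (0 : ℝ) ≤ _)]

lemma sqrt_eight_lt_sqrt_ten : √8 < √10 := Real.sqrt_lt_sqrt (by norm_num) (by norm_num)

lemma dist_signVec_le {p q : Finset ι × ι} (hp : p ∈ pointedTriples ι)
    (hq : q ∈ pointedTriples ι) : dist (signVec p) (signVec q) ≤ √10 := by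
  by_cases h : Conflict p q
  · exact (dist_signVec_of_conflict hp hq h).le
  · exact (dist_signVec_le_of_not_conflict hp hq h).trans sqrt_eight_lt_sqrt_ten.le

lemma sqrt_ten_le_diam_of_conflict {F : Finset (Finset ι × ι)} (hF : F ⊆ pointedTriples ι)
    {p q : Finset ι × ι} (hp : p ∈ F) (hq : q ∈ F) (h : Conflict p q) :
    √10 ≤ Metric.diam (signVec '' (F : Set (Finset ι × ι))) := by
  rw [← dist_signVec_of_conflict (hF hp) (hF hq) h]
  exact Metric.dist_le_diam_of_mem (F.finite_toSet.image _).isBounded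
    (Set.mem_image_of_mem _ hp) (Set.mem_image_of_mem _ hq)

lemma diam_signVec_image_lt_iff {F : Finset (Finset ι × ι)} (hF : F ⊆ pointedTriples ι) :
    Metric.diam (signVec '' (F : Set (Finset ι × ι))) < √10 ↔ ConflictFree F := by
  constructor
  · exact fun hdiam p hp q hq h ↦ (sqrt_ten_le_diam_of_conflict hF hp hq h).not_gt hdiam
  · intro hfree
    refine (Metric.diam_le_of_forall_dist_le (Real.sqrt_nonneg _) ?_).trans_lt
      sqrt_eight_lt_sqrt_ten
    rintro _ ⟨p, hp, rfl⟩ _ ⟨q, hq, rfl⟩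
    exact dist_signVec_le_of_not_conflict (hF hp) (hF hq) (hfree p hp q hq)

lemma diam_signVec_image_pointedTriples (hι : 4 ≤ Fintype.card ι) :
    Metric.diam (signVec '' (pointedTriples ι : Set (Finset ι × ι))) = √10 := by
  apply le_antisymm
  · refine Metric.diam_le_of_forall_dist_le (Real.sqrt_nonneg _) ?_
    rintro _ ⟨p, hp, rfl⟩ _ ⟨q, hq, rfl⟩
    exact dist_signVec_le hp hq
  · obtain ⟨p, hp, q, hq, h⟩ := exists_conflict_mem_pointedTriples hι
    exact sqrt_ten_le_diam_of_conflict subset_rfl hp hq h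

lemma ncard_signVec_image {F : Finset (Finset ι × ι)} (hF : F ⊆ pointedTriples ι) :
    (signVec '' (F : Set (Finset ι × ι))).ncard = #F := by
  rw [Set.InjOn.ncard_image (injOn_signVec_pointedTriples.mono (coe_subset.2 hF)),
    Set.ncard_coe_finset]

lemma signVec_mem_L {k l : ℕ} {p : Finset (Fin (1 + k + l)) × Fin (1 + k + l)}
    (hcard : #p.1 = l + 1) (hp : p.2 ∈ p.1) : signVec p ∈ L 1 k l := by
  have hneg : (univ.filter fun i ↦ signVec p i = -1) = {p.2} := by
    ext; simp [signVec_eq_neg_one_iff]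
  have hzero : (univ.filter fun i ↦ signVec p i = 0) = p.1ᶜ := by
    ext; simp [signVec_eq_zero_iff hp]
  have hone : (univ.filter fun i ↦ signVec p i = 1) = p.1.erase p.2 := by
    ext; simp [signVec_eq_one_iff]
  refine ⟨?_, ?_, ?_⟩
  · rw [hneg, card_singleton]
  · rw [hzero, card_compl, Fintype.card_fin, hcard]; omega
  · rw [hone, card_erase_of_mem hp, hcard]; omega

lemma exists_signVec_eq_of_mem_L {k l : ℕ} {x : EuclideanSpace ℝ (Fin (1 + k + l))}
    (hx : x ∈ L 1 k l) :
    ∃ p : Finset (Fin (1 + k + l)) × Fin (1 + k + l), (#p.1 = l + 1 ∧ p.2 ∈ p.1) ∧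
      signVec p = x := by
  obtain ⟨hneg, hzero, hone⟩ := hx
  obtain ⟨a, ha⟩ := card_eq_one.1 hneg
  have hxa (i) : x i = -1 ↔ i = a := by simpa using Finset.ext_iff.1 ha i
  set P := univ.filter fun i ↦ x i = 1 with hP
  have hxP (i) : x i = 1 ↔ i ∈ P := by simp [hP]
  have haP : a ∉ P := by rw [← hxP, (hxa a).2 rfl]; norm_num
  have hzero_eq : (univ.filter fun i ↦ x i = 0) = (insert a P)ᶜ := by
    refine eq_of_subset_of_card_le (fun i hi ↦ ?_) ?_
    · have hxi : x i = 0 := (mem_filter.1 hi).2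
      rw [mem_compl, mem_insert, ← hxa, ← hxP, hxi]
      norm_num
    · rw [card_compl, card_insert_of_notMem haP, hone, hzero, Fintype.card_fin]
      omega
  refine ⟨(insert a P, a), ⟨by rw [card_insert_of_notMem haP, hone], by simp⟩, ?_⟩
  ext i
  rw [signVec_apply]
  split_ifs with hia hiP
  · exact ((hxa i).2 hia).symm
  · exact ((hxP i).2 (mem_of_mem_insert_of_ne hiP hia)).symm
  · have hi := mem_compl.2 hiP
    rw [← hzero_eq] at hi
    exact (mem_filter.1 hi).2.symm

lemma L_one_two_eq_signVec_image (k : ℕ) :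
    L 1 k 2 = signVec '' (pointedTriples (Fin (1 + k + 2)) : Set _) := by
  ext x
  constructor
  · intro hx
    obtain ⟨p, hp, rfl⟩ := exists_signVec_eq_of_mem_L hx
    exact ⟨p, mem_pointedTriples.2 hp, rfl⟩
  · rintro ⟨p, hp, rfl⟩
    obtain ⟨hcard, hmem⟩ := mem_pointedTriples.1 hp
    exact signVec_mem_L hcard hmem

end SignVector

lemma diam_L_one_two {k : ℕ} (hk : 1 ≤ k) : Metric.diam (L 1 k 2) = √10 := by
  rw [L_one_two_eq_signVec_image, diam_signVec_image_pointedTriples]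
  rw [Fintype.card_fin]
  omega

theorem ncard_le_of_diam_lt {k : ℕ} {X : Set (EuclideanSpace ℝ (Fin (1 + k + 2)))}
    (hX : X ⊆ L 1 k 2) (hdiam : Metric.diam X < √10) : X.ncard ≤ (k + 3).choose 3 + 2 := by
  rw [L_one_two_eq_signVec_image, Set.subset_image_iff] at hX
  obtain ⟨F, hF, rfl⟩ := hX
  lift F to Finset (Finset (Fin (1 + k + 2)) × Fin (1 + k + 2)) using F.toFinite
  rw [Finset.coe_subset] at hF
  have hcard := ConflictFree.card_le hF ((diam_signVec_image_lt_iff hF).1 hdiam)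
  have hdim : Fintype.card (Fin (1 + k + 2)) = k + 3 := by rw [Fintype.card_fin]; omega
  rwa [hdim, ← ncard_signVec_image hF] at hcard

section Extremal

open Finset

variable {V : Type*} [Fintype V] [LinearOrder V]

/-- The triples pointed at their least element, together with every pointing of the one
triple `T₀`. For `T₀` the three largest elements this is the paper's `X_k`. -/
def leastPointedTriples (T₀ : Finset V) : Finset (Finset V × V) :=
  {p ∈ pointedTriples V | (∀ j ∈ p.1, p.2 ≤ j) ∨ p.1 = T₀}

lemma mem_leastPointedTriples {T₀ T : Finset V} {a : V} :
    (T, a) ∈ leastPointedTriples T₀ ↔ (#T = 3 ∧ a ∈ T) ∧ ((∀ j ∈ T, a ≤ j) ∨ T = T₀) := by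
  simp [leastPointedTriples, mem_pointedTriples]

lemma leastPointedTriples_subset (T₀ : Finset V) : leastPointedTriples T₀ ⊆ pointedTriples V :=
  filter_subset _ _

lemma conflictFree_leastPointedTriples {T₀ : Finset V} (hT₀ : #T₀ = 3)
    (hupper : IsUpperSet (T₀ : Set V)) : ConflictFree (leastPointedTriples T₀) := by
  have eq_top {T : Finset V} {b : V} (hT : #T = 3) (hb : ∀ j ∈ T, b ≤ j) (hbT₀ : b ∈ T₀) :
      T = T₀ :=
    eq_of_subset_of_card_le (fun j hj ↦ hupper (hb j hj) hbT₀) (hT₀.trans hT.symm).le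
  rintro ⟨S, a⟩ hp ⟨T, b⟩ hq ⟨hST, hab, haT, hbS⟩
  obtain ⟨⟨hS, -⟩, haS | rfl⟩ := mem_leastPointedTriples.1 hp <;>
    obtain ⟨⟨hT, -⟩, hbT | rfl⟩ := mem_leastPointedTriples.1 hq
  · exact hab (le_antisymm (haS b hbS) (hbT a haT))
  · exact hST (eq_top hS haS haT)
  · exact hST (eq_top hT hbT hbS).symm
  · exact hST rfl

lemma card_rootsOf_leastPointedTriples {T₀ T : Finset V} (hT : #T = 3) :
    #(rootsOf (leastPointedTriples T₀) T) = 1 + if T = T₀ then 2 else 0 := by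
  split_ifs with h
  · subst h
    have hroots : rootsOf (leastPointedTriples T) T = T := by
      ext a
      simp [mem_rootsOf, mem_leastPointedTriples, hT]
    rw [hroots, hT]
  · have hne : T.Nonempty := card_pos.1 (by omega)
    have hroots : rootsOf (leastPointedTriples T₀) T = {T.min' hne} := by
      ext a
      rw [mem_rootsOf, mem_leastPointedTriples, mem_singleton, eq_comm (a := a), T.min'_eq_iff hne]
      simp [hT, h]
    rw [hroots, card_singleton]

lemma card_leastPointedTriples {T₀ : Finset V} (hT₀ : #T₀ = 3) :
    #(leastPointedTriples T₀) = (Fintype.card V).choose 3 + 2 := by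
  have hmem : T₀ ∈ powersetCard 3 univ := mem_powersetCard.2 ⟨subset_univ _, hT₀⟩
  rw [card_eq_sum_card_rootsOf (leastPointedTriples_subset T₀),
    sum_congr rfl fun T hT ↦ card_rootsOf_leastPointedTriples (mem_powersetCard.1 hT).2,
    sum_add_distrib, sum_ite_eq', if_pos hmem, ← card_eq_sum_ones, card_powersetCard, card_univ]

variable {k : ℕ}

/-- The three largest elements of `Fin (1 + k + 2)`. -/
def topTriple (k : ℕ) : Finset (Fin (1 + k + 2)) := Ici ⟨k, by omega⟩

lemma mem_topTriple {i : Fin (1 + k + 2)} : i ∈ topTriple k ↔ ⟨k, by omega⟩ ≤ i := mem_Ici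

lemma card_topTriple (k : ℕ) : #(topTriple k) = 3 := by
  rw [topTriple, Fin.card_Ici, Fin.val_mk]
  omega

lemma signVec_mem_Sset_iff {T : Finset (Fin (1 + k + 2))} {a i : Fin (1 + k + 2)}
    (hp : (T, a) ∈ pointedTriples (Fin (1 + k + 2))) :
    signVec (T, a) ∈ Sset k i ↔ i = a ∧ ∀ j ∈ T, i ≤ j := by
  obtain ⟨hT, ha⟩ := mem_pointedTriples.1 hp
  have hL : signVec (T, a) ∈ L 1 k 2 := signVec_mem_L (p := (T, a)) hT ha
  have hzero (j) : signVec (T, a) j = 0 ↔ j ∉ T := signVec_eq_zero_iff (p := (T, a)) ha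
  simp only [Sset, Set.mem_ofPred_eq, hL, true_and, hzero, signVec_eq_neg_one_iff,
    Fin.val_inj, forall_eq, Fin.val_fin_lt]
  grind

lemma signVec_mem_Tset_iff {T : Finset (Fin (1 + k + 2))} {a i : Fin (1 + k + 2)}
    (hp : (T, a) ∈ pointedTriples (Fin (1 + k + 2))) :
    signVec (T, a) ∈ Tset k i ↔ i ∈ T.erase a ∧ ∀ j ∈ T, i ≤ j := by
  obtain ⟨hT, ha⟩ := mem_pointedTriples.1 hp
  have hL : signVec (T, a) ∈ L 1 k 2 := signVec_mem_L (p := (T, a)) hT ha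
  have hzero (j) : signVec (T, a) j = 0 ↔ j ∉ T := signVec_eq_zero_iff (p := (T, a)) ha
  simp only [Tset, Set.mem_ofPred_eq, hL, true_and, hzero, signVec_eq_one_iff,
    Fin.val_inj, forall_eq, Fin.val_fin_lt]
  grind

lemma Xk_subset (k : ℕ) : Xk k ⊆ L 1 k 2 :=
  Set.union_subset (Set.sep_subset _ _) (Set.iUnion₂_subset fun _ _ ↦ Set.sep_subset _ _)

lemma signVec_mem_Xk_iff {T : Finset (Fin (1 + k + 2))} {a : Fin (1 + k + 2)}
    (hp : (T, a) ∈ pointedTriples (Fin (1 + k + 2))) :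
    signVec (T, a) ∈ Xk k ↔ (T, a) ∈ leastPointedTriples (topTriple k) := by
  obtain ⟨hT, ha⟩ := mem_pointedTriples.1 hp
  have hTset : signVec (T, a) ∈ Tset k k ↔ T = topTriple k ∧ ⟨k, by omega⟩ ≠ a := by
    rw [signVec_mem_Tset_iff (i := ⟨k, by omega⟩) hp]
    refine ⟨fun ⟨hmem, hle⟩ ↦ ⟨eq_of_subset_of_card_le (fun j hj ↦ mem_topTriple.2 (hle j hj)) ?_,
      ne_of_mem_erase hmem⟩, ?_⟩
    · rw [card_topTriple, hT]
    · rintro ⟨rfl, hne⟩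
      exact ⟨mem_erase.2 ⟨hne, mem_topTriple.2 le_rfl⟩, fun j ↦ mem_topTriple.1⟩
  have hSset : signVec (T, a) ∈ ⋃ i ∈ range (k + 1), Sset k i ↔ ∀ j ∈ T, a ≤ j := by
    simp only [Set.mem_iUnion, mem_range, exists_prop]
    constructor
    · rintro ⟨i, hi, hmem⟩
      obtain ⟨rfl, hle⟩ := (signVec_mem_Sset_iff (i := ⟨i, by omega⟩) hp).1 hmem
      exact hle
    · intro hle
      refine ⟨a, ?_, (signVec_mem_Sset_iff hp).2 ⟨rfl, hle⟩⟩
      have hcard := card_le_card fun j hj ↦ mem_Ici.2 (hle j hj)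
      rw [hT, Fin.card_Ici] at hcard
      omega
  rw [Xk, Set.mem_union, hTset, hSset, mem_leastPointedTriples]
  grind [mem_topTriple]

lemma Xk_eq_signVec_image (k : ℕ) :
    Xk k = signVec '' (leastPointedTriples (topTriple k) : Set _) := by
  ext x
  constructor
  · intro hx
    obtain ⟨p, hp, rfl⟩ := L_one_two_eq_signVec_image k ▸ Xk_subset k hx
    exact ⟨p, (signVec_mem_Xk_iff hp).1 hx, rfl⟩
  · rintro ⟨p, hp, rfl⟩
    exact (signVec_mem_Xk_iff (leastPointedTriples_subset _ hp)).2 hp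

lemma diam_Xk_lt (k : ℕ) : Metric.diam (Xk k) < √10 := by
  rw [Xk_eq_signVec_image, diam_signVec_image_lt_iff (leastPointedTriples_subset _)]
  exact conflictFree_leastPointedTriples (card_topTriple k)
    (by simpa [topTriple] using isUpperSet_Ici _)

lemma ncard_Xk (k : ℕ) : (Xk k).ncard = (k + 3).choose 3 + 2 := by
  rw [Xk_eq_signVec_image, ncard_signVec_image (leastPointedTriples_subset _),
    card_leastPointedTriples (card_topTriple k), Fintype.card_fin, add_comm 1 k, add_assoc]

end Extremal

theorem stmt_17 (k : ℕ) (hk : 1 ≤ k) :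
    (∀ X ⊆ L 1 k 2, Metric.diam X < Metric.diam (L 1 k 2) →
      X.ncard ≤ Nat.choose (k+3) 3 + 2) ∧
    Xk k ⊆ L 1 k 2 ∧ Metric.diam (Xk k) < Metric.diam (L 1 k 2) ∧
    (Xk k).ncard = Nat.choose (k+3) 3 + 2 := by
  rw [diam_L_one_two hk]
  exact ⟨fun X hX hdiam ↦ ncard_le_of_diam_lt hX hdiam, Xk_subset k, diam_Xk_lt k, ncard_Xk k⟩
end
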